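/- arXiv:math/0409031 — 2 statements merged into one kernel-verified Lean document; each statement's English description precedes it below -/
import Mathlib

section
/- For all indices i, j ∈ {1,…,ℓ}, arbitrary functions R_i : ℂ → ℂ, all u, v ∈ ℂ with u ≠ v, and every function f, at every point γ (in the Cartan/difference-operator setting described in the context) at which all denominators occurring are nonzero: ((H_i(u)F_j(v) − F_j(v)H_i(u))f)(γ) = +(h/2)(α_i,α_j)·(u−v)^{−1} · ((H_i(u)(F_j(u)−F_j(v)) + (F_j(u)−F_j(v))H_i(u))f)(γ). -/
/-!
Since `H_i(u)` is multiplication by a function `A`, the identity can be checked on each summand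
`κ′_{j,l}` of `F_j` separately, where it compares `A γ` with `A γ'` at `γ' = γ + h d_j e_{j,l}`.
With `w = γ_{j,l} + h d_j` and `c = (h/2)(α_i, α_j)`, the identity
`(u - v)⁻¹ ((u - w)⁻¹ - (v - w)⁻¹) = -(u - w)⁻¹ (v - w)⁻¹` reduces it to
`A γ * (u - w + c) = A γ' * (u - w - c)`, which is `Hop_shift`.

The shift affects only the factors of `A` that contain `γ_{j,l}`. For `i = j` these are
`(u - γ_{j,l})⁻¹ (u - h d_j - γ_{j,l})⁻¹`. For `i ≠ j` they are
`∏_{r=1}^{n} (u - (h/2)((α_i,α_j) + 2 r d_j) - γ_{j,l})` with `n = -a_{ji}`. In both cases the shift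
moves the product by one step, so the quotient telescopes to its two end factors; in the second
case `d_j a_{ji} = d_i a_{ij}` identifies the last one (`prod_shift_telescope`).
-/

open Finset

noncomputable section

variable {ℓ : ℕ}

/-- The pairing `(α_i, α_j) = d_i a_{ij}`, as a complex number. -/
def pr (a : Fin ℓ → Fin ℓ → ℤ) (d : Fin ℓ → ℕ) (i j : Fin ℓ) : ℂ :=
  (d i : ℂ) * (a i j : ℂ)

/-- Points: tuples `γ = (γ_{i,k})`, `i ∈ {1,…,ℓ}`, `1 ≤ k ≤ m_i`, of complex numbers. -/
abbrev Pt {ℓ : ℕ} (m : Fin ℓ → ℕ) : Type := ((i : Fin ℓ) × Fin (m i)) → ℂ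

variable {m : Fin ℓ → ℕ}

/-- `P_s(u; γ) = ∏_{p=1}^{m_s} (u − γ_{s,p})`. -/
def Pp (γ : Pt m) (s : Fin ℓ) (u : ℂ) : ℂ :=
  ∏ p : Fin (m s), (u - γ ⟨s, p⟩)

/-- The shifted point `γ + c·e_{i,k}`. -/
def sh (γ : Pt m) (i : Fin ℓ) (k : Fin (m i)) (c : ℂ) : Pt m :=
  fun x => if x = ⟨i, k⟩ then γ x + c else γ x

/-- The denominator `∏_{p ≠ k} (γ_{i,k} − γ_{i,p})` (an empty product equals 1). -/
def Dk (γ : Pt m) (i : Fin ℓ) (k : Fin (m i)) : ℂ :=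
  ∏ p ∈ Finset.univ.erase k, (γ ⟨i, k⟩ - γ ⟨i, p⟩)

/-- The difference operator `κ_{i,k}`:
`(κ_{i,k} f)(γ) = (√d_i)⁻¹ · [∏_{s>i} ∏_{r=1}^{−a_{si}} P_s(γ_{i,k} − (h/2)(α_i+rα_s,α_s); γ)]
  · [∏_{p≠k}(γ_{i,k} − γ_{i,p})]⁻¹ · f(γ − h d_i e_{i,k})`. -/
def kap (a : Fin ℓ → Fin ℓ → ℤ) (d : Fin ℓ → ℕ) (h : ℂ)
    (i : Fin ℓ) (k : Fin (m i)) (f : Pt m → ℂ) (γ : Pt m) : ℂ :=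
  ((Real.sqrt (d i) : ℝ) : ℂ)⁻¹ *
    (∏ s ∈ Finset.univ.filter (fun s => i < s), ∏ r ∈ Finset.range (-(a s i)).toNat,
      Pp γ s (γ ⟨i, k⟩ - h / 2 * (pr a d i s + ((r : ℂ) + 1) * pr a d s s))) *
    (Dk γ i k)⁻¹ * f (sh γ i k (-(h * (d i : ℂ))))

/-- The difference operator `κ′_{i,k}` (depending on the functions `R_i`):
`(κ′_{i,k} f)(γ) = −(√d_i)⁻¹ · R_i(γ_{i,k} + h d_i)
  · [∏_{s<i} ∏_{r=1}^{−a_{si}} P_s(γ_{i,k} − (h/2)(α_i+rα_s,α_s) + h d_i; γ)]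
  · [∏_{p≠k}(γ_{i,k} − γ_{i,p})]⁻¹ · f(γ + h d_i e_{i,k})`. -/
def kap' (a : Fin ℓ → Fin ℓ → ℤ) (d : Fin ℓ → ℕ) (h : ℂ) (R : Fin ℓ → ℂ → ℂ)
    (i : Fin ℓ) (k : Fin (m i)) (f : Pt m → ℂ) (γ : Pt m) : ℂ :=
  -((Real.sqrt (d i) : ℝ) : ℂ)⁻¹ * R i (γ ⟨i, k⟩ + h * (d i : ℂ)) *
    (∏ s ∈ Finset.univ.filter (fun s => s < i), ∏ r ∈ Finset.range (-(a s i)).toNat,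
      Pp γ s (γ ⟨i, k⟩ - h / 2 * (pr a d i s + ((r : ℂ) + 1) * pr a d s s) + h * (d i : ℂ))) *
    (Dk γ i k)⁻¹ * f (sh γ i k (h * (d i : ℂ)))

/-- The multiplication operator `H_i(u)`. -/
def Hop (a : Fin ℓ → Fin ℓ → ℤ) (d : Fin ℓ → ℕ) (h : ℂ) (R : Fin ℓ → ℂ → ℂ)
    (u : ℂ) (i : Fin ℓ) (f : Pt m → ℂ) (γ : Pt m) : ℂ :=
  R i u *
    (∏ s ∈ Finset.univ.filter (fun s => s ≠ i), ∏ r ∈ Finset.range (-(a s i)).toNat,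
      Pp γ s (u - h / 2 * (pr a d i s + ((r : ℂ) + 1) * pr a d s s))) *
    (Pp γ i u * Pp γ i (u - h * (d i : ℂ)))⁻¹ * f γ

/-- The operator `E_i(u) = Σ_{k=1}^{m_i} (u − γ_{i,k})⁻¹ κ_{i,k}`. -/
def Eop (a : Fin ℓ → Fin ℓ → ℤ) (d : Fin ℓ → ℕ) (h : ℂ)
    (u : ℂ) (i : Fin ℓ) (f : Pt m → ℂ) (γ : Pt m) : ℂ :=
  ∑ k : Fin (m i), (u - γ ⟨i, k⟩)⁻¹ * kap a d h i k f γ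

/-- The operator `F_i(u) = Σ_{k=1}^{m_i} κ′_{i,k} (u − γ_{i,k} − h d_i)⁻¹`. -/
def Fop (a : Fin ℓ → Fin ℓ → ℤ) (d : Fin ℓ → ℕ) (h : ℂ) (R : Fin ℓ → ℂ → ℂ)
    (u : ℂ) (i : Fin ℓ) (f : Pt m → ℂ) (γ : Pt m) : ℂ :=
  ∑ k : Fin (m i), (u - γ ⟨i, k⟩ - h * (d i : ℂ))⁻¹ * kap' a d h R i k f γ

/-- The zero mode `E_i^{(0)} = Σ_{k=1}^{m_i} κ_{i,k}`. -/
def E0 (a : Fin ℓ → Fin ℓ → ℤ) (d : Fin ℓ → ℕ) (h : ℂ)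
    (i : Fin ℓ) (f : Pt m → ℂ) (γ : Pt m) : ℂ :=
  ∑ k : Fin (m i), kap a d h i k f γ

lemma Pp_eq (γ : Pt m) (j : Fin ℓ) (l : Fin (m j)) (x : ℂ) :
    Pp γ j x = (x - γ ⟨j, l⟩) * ∏ p ∈ Finset.univ.erase l, (x - γ ⟨j, p⟩) :=
  (Finset.mul_prod_erase _ _ (Finset.mem_univ l)).symm

lemma Pp_sh_self (γ : Pt m) (j : Fin ℓ) (l : Fin (m j)) (c x : ℂ) :
    Pp (sh γ j l c) j x
      = (x - γ ⟨j, l⟩ - c) * ∏ p ∈ Finset.univ.erase l, (x - γ ⟨j, p⟩) := by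
  rw [Pp_eq _ j l]
  congr 1
  · simp [sh, sub_sub]
  · refine Finset.prod_congr rfl fun p hp => ?_
    simp [sh, Finset.ne_of_mem_erase hp]

lemma Pp_sh_of_ne (γ : Pt m) {s j : Fin ℓ} (hs : s ≠ j) (l : Fin (m j)) (c x : ℂ) :
    Pp (sh γ j l c) s x = Pp γ s x := by
  refine Finset.prod_congr rfl fun p _ => ?_
  simp [sh, hs]

/-- Shifting every factor of a product along an arithmetic progression by one step exchanges its
first factor for the next one after its last. -/
lemma prod_shift_telescope (y t : ℂ) (n : ℕ) :
    (∏ r ∈ Finset.range n, (y - r * t)) * (y - n * t)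
      = (∏ r ∈ Finset.range n, (y - r * t - t)) * y := by
  rw [← Finset.prod_range_succ (fun r : ℕ => y - (r : ℂ) * t), Finset.prod_range_succ']
  simp only [Nat.cast_add, Nat.cast_one, Nat.cast_zero, zero_mul, sub_zero]
  congr 1
  exact Finset.prod_congr rfl fun r _ => by ring

/-- `H_i(u)` is multiplication by its value on the constant function `1`. -/
lemma Hop_eq (a : Fin ℓ → Fin ℓ → ℤ) (d : Fin ℓ → ℕ) (h : ℂ) (R : Fin ℓ → ℂ → ℂ)
    (u : ℂ) (i : Fin ℓ) (f : Pt m → ℂ) (γ : Pt m) :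
    Hop a d h R u i f γ = Hop a d h R u i (fun _ => 1) γ * f γ := by
  simp only [Hop, mul_one]

lemma kap'_Hop (a : Fin ℓ → Fin ℓ → ℤ) (d : Fin ℓ → ℕ) (h : ℂ) (R : Fin ℓ → ℂ → ℂ)
    (u : ℂ) (i j : Fin ℓ) (l : Fin (m j)) (f : Pt m → ℂ) (γ : Pt m) :
    kap' a d h R j l (Hop a d h R u i f) γ
      = Hop a d h R u i (fun _ => 1) (sh γ j l (h * (d j : ℂ))) * kap' a d h R j l f γ := by
  simp only [kap']
  rw [Hop_eq]
  ring

/-- How the multiplier of `H_i(u)` changes under `γ ↦ γ + h d_j e_{j,l}`. -/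
lemma Hop_shift (a : Fin ℓ → Fin ℓ → ℤ) (d : Fin ℓ → ℕ)
    (hdiag : ∀ i, a i i = 2) (hoff : ∀ i j, i ≠ j → a i j ≤ 0)
    (hsymm : ∀ i j, (d i : ℤ) * a i j = (d j : ℤ) * a j i)
    (h : ℂ) (R : Fin ℓ → ℂ → ℂ) (i j : Fin ℓ) (u : ℂ) (γ : Pt m) (l : Fin (m j))
    (hP : Pp γ i u * Pp γ i (u - h * (d i : ℂ)) ≠ 0)
    (hPs : Pp (sh γ j l (h * (d j : ℂ))) i u *
        Pp (sh γ j l (h * (d j : ℂ))) i (u - h * (d i : ℂ)) ≠ 0) :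
    Hop a d h R u i (fun _ => 1) γ * (u - γ ⟨j, l⟩ - h * (d j : ℂ) + h / 2 * pr a d i j)
      = Hop a d h R u i (fun _ => 1) (sh γ j l (h * (d j : ℂ))) *
          (u - γ ⟨j, l⟩ - h * (d j : ℂ) - h / 2 * pr a d i j) := by
  simp only [Hop, mul_one]
  by_cases hij : i = j
  · subst hij
    have hnum : ∀ s ∈ Finset.univ.filter (fun s => s ≠ i), ∀ x,
        Pp (sh γ i l (h * (d i : ℂ))) s x = Pp γ s x :=
      fun s hs x => Pp_sh_of_ne γ (Finset.mem_filter.1 hs).2 l _ x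
    rw [Finset.prod_congr rfl fun s hs => Finset.prod_congr rfl fun r _ => hnum s hs _]
    rw [mul_assoc, mul_assoc (R i u * _)]
    congr 1
    have hc : h / 2 * pr a d i i = h * d i := by
      simp only [pr, hdiag]; push_cast; ring
    rw [hc]
    simp only [Pp_sh_self] at hPs ⊢
    simp only [Pp_eq γ i l] at hP ⊢
    rw [inv_mul_eq_div, inv_mul_eq_div, div_eq_div_iff hP hPs]
    ring
  · have hji : j ≠ i := fun e => hij e.symm
    simp only [Pp_sh_of_ne γ hij]
    have hmem : j ∈ Finset.univ.filter (fun s => s ≠ i) := by simp [hji]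
    rw [← Finset.mul_prod_erase _ _ hmem, ← Finset.mul_prod_erase _ _ hmem]
    have hrest : ∀ s ∈ (Finset.univ.filter (fun s => s ≠ i)).erase j, ∀ x,
        Pp (sh γ j l (h * (d j : ℂ))) s x = Pp γ s x :=
      fun s hs x => Pp_sh_of_ne γ (Finset.ne_of_mem_erase hs) l _ x
    rw [Finset.prod_congr (g := fun s => ∏ r ∈ Finset.range (-(a s i)).toNat,
      Pp γ s (u - h / 2 * (pr a d i s + ((r : ℂ) + 1) * pr a d s s))) rfl
      fun s hs => Finset.prod_congr rfl fun r _ => hrest s hs _]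
    simp only [Pp_sh_self, Pp_eq γ j l, Finset.prod_mul_distrib]
    have hn : (((-(a j i)).toNat : ℕ) : ℂ) = -(a j i : ℂ) := by
      have : (((-(a j i)).toNat : ℕ) : ℤ) = -(a j i) :=
        Int.toNat_of_nonneg (by have := hoff j i hji; omega)
      exact_mod_cast this
    have hs : (d i : ℂ) * (a i j : ℂ) = (d j : ℂ) * (a j i : ℂ) := by
      exact_mod_cast hsymm i j
    have hjj : pr a d j j = 2 * d j := by
      simp only [pr, hdiag]; push_cast; ring
    have key := prod_shift_telescope (u - γ ⟨j, l⟩ - h * (d j : ℂ) - h / 2 * pr a d i j)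
      (h * d j) (-(a j i)).toNat
    have hlast : u - γ ⟨j, l⟩ - h * (d j : ℂ) - h / 2 * pr a d i j
          - ((-(a j i)).toNat : ℕ) * (h * d j)
        = u - γ ⟨j, l⟩ - h * (d j : ℂ) + h / 2 * pr a d i j := by
      rw [hn]; simp only [pr]; linear_combination (-h) * hs
    rw [hlast] at key
    have hA : ∀ r : ℕ, u - h / 2 * (pr a d i j + ((r : ℂ) + 1) * pr a d j j) - γ ⟨j, l⟩
        = u - γ ⟨j, l⟩ - h * (d j : ℂ) - h / 2 * pr a d i j - r * (h * d j) := by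
      intro r; rw [hjj]; ring
    simp only [hA]
    linear_combination (R i u * (∏ r ∈ Finset.range (-(a j i)).toNat,
      ∏ p ∈ Finset.univ.erase l,
        (u - h / 2 * (pr a d i j + ((r : ℂ) + 1) * pr a d j j) - γ ⟨j, p⟩)) *
      (∏ s ∈ (Finset.univ.filter (fun s => s ≠ i)).erase j,
        ∏ r ∈ Finset.range (-(a s i)).toNat,
          Pp γ s (u - h / 2 * (pr a d i s + ((r : ℂ) + 1) * pr a d s s))) *
      (Pp γ i u * Pp γ i (u - h * (d i : ℂ)))⁻¹) * key

/-- The relation `[H_i(u), F_j(v)] = +(h/2)(α_i,α_j)·(u−v)⁻¹·[H_i(u), F_j(u)−F_j(v)]₊`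
for the explicit difference operators. -/
theorem H_F_commutation
    (hℓ : 1 ≤ ℓ) (a : Fin ℓ → Fin ℓ → ℤ) (d : Fin ℓ → ℕ)
    (hdiag : ∀ i, a i i = 2) (hoff : ∀ i j, i ≠ j → a i j ≤ 0)
    (hdpos : ∀ i, 0 < d i) (hsymm : ∀ i j, (d i : ℤ) * a i j = (d j : ℤ) * a j i)
    (h : ℂ) (R : Fin ℓ → ℂ → ℂ)
    (i j : Fin ℓ) (u v : ℂ) (huv : u ≠ v)
    (f : Pt m → ℂ) (γ : Pt m)
    (hP : Pp γ i u * Pp γ i (u - h * (d i : ℂ)) ≠ 0)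
    (hPs : ∀ l : Fin (m j),
      Pp (sh γ j l (h * (d j : ℂ))) i u *
        Pp (sh γ j l (h * (d j : ℂ))) i (u - h * (d i : ℂ)) ≠ 0)
    (hD : ∀ l : Fin (m j), Dk γ j l ≠ 0)
    (hu : ∀ l : Fin (m j), u - γ ⟨j, l⟩ - h * (d j : ℂ) ≠ 0)
    (hv : ∀ l : Fin (m j), v - γ ⟨j, l⟩ - h * (d j : ℂ) ≠ 0) :
    Hop a d h R u i (Fop a d h R v j f) γ - Fop a d h R v j (Hop a d h R u i f) γ
      = (h / 2 * pr a d i j) * (u - v)⁻¹ *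
          (Hop a d h R u i (fun γ' => Fop a d h R u j f γ' - Fop a d h R v j f γ') γ
            + (Fop a d h R u j (Hop a d h R u i f) γ
                - Fop a d h R v j (Hop a d h R u i f) γ)) := by
  rw [Hop_eq a d h R u i (Fop a d h R v j f), Hop_eq a d h R u i
    (fun γ' => Fop a d h R u j f γ' - Fop a d h R v j f γ')]
  simp only [Fop, kap'_Hop, Finset.mul_sum, ← Finset.sum_sub_distrib, ← Finset.sum_add_distrib]
  refine Finset.sum_congr rfl fun l _ => ?_
  have key := Hop_shift a d hdiag hoff hsymm h R i j u γ l hP (hPs l)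
  generalize Hop a d h R u i (fun _ => 1) γ = A at *
  generalize Hop a d h R u i (fun _ => 1) (sh γ j l (h * (d j : ℂ))) = B at *
  generalize kap' a d h R j l f γ = K
  have hul := hu l
  have hvl := hv l
  have huv' : u - v ≠ 0 := sub_ne_zero.2 huv
  -- the partial-fraction identity that removes the factor `(u - v)⁻¹`
  have hpf : (u - v)⁻¹ * ((u - γ ⟨j, l⟩ - h * (d j : ℂ))⁻¹ - (v - γ ⟨j, l⟩ - h * (d j : ℂ))⁻¹)
      = -((u - γ ⟨j, l⟩ - h * (d j : ℂ))⁻¹ * (v - γ ⟨j, l⟩ - h * (d j : ℂ))⁻¹) := by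
    rw [inv_sub_inv hul hvl]
    field_simp
    ring
  have hinv := mul_inv_cancel₀ hul
  linear_combination (K * (u - γ ⟨j, l⟩ - h * (d j : ℂ))⁻¹ * (v - γ ⟨j, l⟩ - h * (d j : ℂ))⁻¹) * key
    - (h / 2 * pr a d i j * (A + B) * K) * hpf
    - ((A - B) * K * (v - γ ⟨j, l⟩ - h * (d j : ℂ))⁻¹) * hinv

end
end

section
/- Assume l_i := Σ_{j=1}^{ℓ} m_j a_{ji} ≥ 0 for every i ∈ {1,…,ℓ}, and let each R_i be a monic polynomial of degree l_i, i.e. R_i(u) = ∏_{k=1}^{l_i}(u − ν_{i,k}) with arbitrary complex parameters ν_{i,k}. Then for all i, j ∈ {1,…,ℓ}, all u, v ∈ ℂ with u ≠ v, and every function f, at every point γ (in the Cartan/difference-operator setting described in the context) at which all denominators occurring are nonzero: ((E_i(u)F_j(v) − F_j(v)E_i(u))f)(γ) = −h·δ_{ij}·(u−v)^{−1}·((H_i(u) − H_i(v))f)(γ); in particular E_i(u) and F_j(v) commute for i ≠ j. -/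
/-!
Every term of `E_i(u) F_j(v)` and of `F_j(v) E_i(u)` belongs to a pair of coordinates
`γ_{i,k}`, `γ_{j,l}`, and the commutator is compared pair by pair.

If the two coordinates are different, the two terms coincide (`EFterm_eq_FEterm`). For
`i = j`, `k ≠ l`, this is an identity between the denominators (`Dk_exchange`). For `i < j`, the
shift of `γ_{j,l}` multiplies `κ_{i,k}` by a telescoping ratio
of linear factors, the shift of `γ_{i,k}` multiplies `κ'_{j,l}` by the inverse ratio, and
the symmetry `d_i a_{ij} = d_j a_{ji}` makes the end factors match (`Wp_exchange`). For `i > j`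
no factor sees the shifts.

If the two coordinates are equal, the shifts cancel and the terms act by multiplication
(`EFterm_diag`, `FEterm_diag`). They are the partial fraction terms of `H_i(u) - H_i(v)` at the
`2 m_i` simple poles `γ_{i,k}` and `γ_{i,k} + h d_i` (`Hop_sub`): by the choice
`deg R_i = l_i` the numerator of `H_i` has degree at most `2 m_i` (`exists_numerator`), so the
polynomial part of `H_i` is constant and drops out of the difference (`partial_fractions`). When
`h = 0` the poles collide, but then both sides of the relation are zero.
-/

open Finset

noncomputable section

variable {ℓ : ℕ}

variable {m : Fin ℓ → ℕ}

/-- The product over `s ∈ S` and `r = 1, …, -a_{si}` of the factors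
`P_s(x − (h/2)(α_i + rα_s, α_s); γ)`; `S = {s > i}` occurs in `κ_{i,k}`, `S = {s < i}` in
`κ'_{i,k}`, and `S = {s ≠ i}` in `H_i`. -/
def Wp (a : Fin ℓ → Fin ℓ → ℤ) (d : Fin ℓ → ℕ) (h : ℂ) (γ : Pt m) (i : Fin ℓ)
    (S : Finset (Fin ℓ)) (x : ℂ) : ℂ :=
  ∏ s ∈ S, ∏ r ∈ Finset.range (-(a s i)).toNat,
    Pp γ s (x - h / 2 * (pr a d i s + ((r : ℂ) + 1) * pr a d s s))

/-! ### Shifted points -/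

lemma sh_same (γ : Pt m) (i : Fin ℓ) (k : Fin (m i)) (c : ℂ) :
    sh γ i k c ⟨i, k⟩ = γ ⟨i, k⟩ + c := by simp [sh]

lemma sh_ne (γ : Pt m) (i : Fin ℓ) (k : Fin (m i)) (c : ℂ) (x : (i : Fin ℓ) × Fin (m i))
    (hx : x ≠ ⟨i, k⟩) : sh γ i k c x = γ x := by simp [sh, hx]

lemma sh_zero (γ : Pt m) (i : Fin ℓ) (k : Fin (m i)) : sh γ i k 0 = γ := by
  funext x; simp [sh]

lemma sh_sh_same (γ : Pt m) (i : Fin ℓ) (k : Fin (m i)) (c c' : ℂ) :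
    sh (sh γ i k c) i k c' = sh γ i k (c + c') := by
  funext x
  by_cases hx : x = ⟨i, k⟩
  · simp [sh, hx, add_assoc]
  · simp [sh, hx]

lemma sh_comm (γ : Pt m) (i j : Fin ℓ) (k : Fin (m i)) (l : Fin (m j)) (c c' : ℂ) :
    sh (sh γ i k c) j l c' = sh (sh γ j l c') i k c := by
  funext x
  simp only [sh]
  split_ifs <;> ring

lemma Pp_sh_ne (γ : Pt m) (i s : Fin ℓ) (k : Fin (m i)) (c x : ℂ) (hs : s ≠ i) :
    Pp (sh γ i k c) s x = Pp γ s x := by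
  refine Finset.prod_congr rfl fun p _ => ?_
  rw [sh_ne]
  exact fun e => hs (congrArg Sigma.fst e)

lemma Pp_split (γ : Pt m) (j : Fin ℓ) (l : Fin (m j)) (x : ℂ) :
    Pp γ j x = (x - γ ⟨j, l⟩) * ∏ p ∈ univ.erase l, (x - γ ⟨j, p⟩) :=
  (Finset.mul_prod_erase univ (fun p => x - γ ⟨j, p⟩) (mem_univ l)).symm

lemma Pp_sh_split (γ : Pt m) (j : Fin ℓ) (l : Fin (m j)) (c x : ℂ) :
    Pp (sh γ j l c) j x = (x - γ ⟨j, l⟩ - c) * ∏ p ∈ univ.erase l, (x - γ ⟨j, p⟩) := by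
  rw [Pp_split _ j l, sh_same, sub_sub]
  congr 1
  refine Finset.prod_congr rfl fun p hp => ?_
  rw [sh_ne]
  simpa using hp

lemma Dk_sh_ne (γ : Pt m) (i j : Fin ℓ) (k : Fin (m i)) (l : Fin (m j)) (c : ℂ) (hij : j ≠ i) :
    Dk (sh γ i k c) j l = Dk γ j l := by
  refine Finset.prod_congr rfl fun p _ => ?_
  rw [sh_ne, sh_ne] <;> exact fun e => hij (congrArg Sigma.fst e)

lemma Dk_sh_same (γ : Pt m) (i : Fin ℓ) (k : Fin (m i)) (c : ℂ) :
    Dk (sh γ i k c) i k = ∏ p ∈ univ.erase k, (γ ⟨i, k⟩ + c - γ ⟨i, p⟩) := by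
  refine Finset.prod_congr rfl fun p hp => ?_
  rw [sh_same, sh_ne]
  simpa using hp

lemma Dk_split (γ : Pt m) (i : Fin ℓ) (k l : Fin (m i)) (hkl : l ≠ k) :
    Dk γ i k = (γ ⟨i, k⟩ - γ ⟨i, l⟩) *
      ∏ p ∈ (univ.erase k).erase l, (γ ⟨i, k⟩ - γ ⟨i, p⟩) :=
  (Finset.mul_prod_erase (univ.erase k) (fun p => γ ⟨i, k⟩ - γ ⟨i, p⟩) (by simp [hkl])).symm

lemma Dk_sh_split (γ : Pt m) (i : Fin ℓ) (k l : Fin (m i)) (c : ℂ) (hkl : l ≠ k) :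
    Dk (sh γ i l c) i k = (γ ⟨i, k⟩ - γ ⟨i, l⟩ - c) *
      ∏ p ∈ (univ.erase k).erase l, (γ ⟨i, k⟩ - γ ⟨i, p⟩) := by
  rw [Dk_split _ i k l hkl, sh_same, sh_ne _ _ _ _ _ (by simpa using hkl.symm), sub_sub]
  congr 1
  refine Finset.prod_congr rfl fun p hp => ?_
  rw [sh_ne]
  simp only [mem_erase] at hp
  simpa using hp.1

/-- The Vandermonde-type denominators of `κ_{i,k}κ'_{i,l}` and of `κ'_{i,l}κ_{i,k}` agree when
`k ≠ l`. -/
lemma Dk_exchange (γ : Pt m) (i : Fin ℓ) (k l : Fin (m i)) (c : ℂ) (hkl : l ≠ k) :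
    Dk γ i k * Dk (sh γ i k (-c)) i l = Dk γ i l * Dk (sh γ i l c) i k := by
  rw [Dk_split γ i k l hkl, Dk_sh_split γ i l k _ hkl.symm, Dk_split γ i l k hkl.symm,
    Dk_sh_split γ i k l _ hkl]
  ring

/-! ### Shifts of the products `Wp` -/

section Wp

variable (a : Fin ℓ → Fin ℓ → ℤ) (d : Fin ℓ → ℕ) (h : ℂ)

lemma Wp_sh_notMem (γ : Pt m) (i j : Fin ℓ) (k : Fin (m i)) (c : ℂ) (S : Finset (Fin ℓ)) (x : ℂ)
    (hS : i ∉ S) : Wp a d h (sh γ i k c) j S x = Wp a d h γ j S x := by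
  refine Finset.prod_congr rfl fun s hs => Finset.prod_congr rfl fun r _ => ?_
  exact Pp_sh_ne _ _ _ _ _ _ (fun e => hS (e ▸ hs))

/-- A shift of `γ_{j,l}` only affects the linear factors containing `γ_{j,l}`; the remaining
part `Q` of the product is the same for all shifts `c`. -/
lemma exists_Wp_sh (γ : Pt m) (i j : Fin ℓ) (l : Fin (m j)) (S : Finset (Fin ℓ)) (x : ℂ)
    (hS : j ∈ S) : ∃ Q : ℂ, ∀ c, Wp a d h (sh γ j l c) i S x =
      (∏ r ∈ Finset.range (-(a j i)).toNat,
        (x - h / 2 * (pr a d i j + ((r : ℂ) + 1) * pr a d j j) - γ ⟨j, l⟩ - c)) * Q := by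
  refine ⟨(∏ r ∈ Finset.range (-(a j i)).toNat, ∏ p ∈ univ.erase l,
      (x - h / 2 * (pr a d i j + ((r : ℂ) + 1) * pr a d j j) - γ ⟨j, p⟩)) *
      Wp a d h γ i (S.erase j) x, fun c => ?_⟩
  rw [← Wp_sh_notMem a d h γ j i l c (S.erase j) x (by simp), ← mul_assoc,
    ← Finset.prod_mul_distrib]
  simp only [← Pp_sh_split]
  exact (Finset.mul_prod_erase S (fun s => ∏ r ∈ Finset.range (-(a s i)).toNat,
    Pp (sh γ j l c) s (x - h / 2 * (pr a d i s + ((r : ℂ) + 1) * pr a d s s))) hS).symm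

/-- Two telescoping products: replacing `t r` by `t (r + 1)` trades the end factor `t 0` for
`t n`, and the changes in the two products compensate each other. -/
lemma prod_shift_mul (n n' : ℕ) (t t' : ℕ → ℂ) (hn : n = 0 ↔ n' = 0) (h0 : t 0 = -t' n')
    (h1 : t n = -t' 0) :
    (∏ r ∈ range n, t r) * ∏ r ∈ range n', t' r =
      (∏ r ∈ range n, t (r + 1)) * ∏ r ∈ range n', t' (r + 1) := by
  rcases n with _ | n
  · simp [hn.1 rfl]
  · rcases n' with _ | n'
    · simp at hn
    · rw [prod_range_succ' t, prod_range_succ' t', prod_range_succ (fun r => t (r + 1)),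
        prod_range_succ (fun r => t' (r + 1)), h0, h1]
      ring

/-- The coefficient exchange behind `[κ_{i,k}, κ'_{j,l}] = 0` for `i ≠ j`. -/
lemma Wp_exchange
    (hoff : ∀ i j, i ≠ j → a i j ≤ 0) (hdpos : ∀ i, 0 < d i)
    (hdiag : ∀ i, a i i = 2)
    (hsymm : ∀ i j, (d i : ℤ) * a i j = (d j : ℤ) * a j i)
    (γ : Pt m) (i j : Fin ℓ) (hij : i ≠ j) (k : Fin (m i)) (l : Fin (m j)) :
    Wp a d h γ i (univ.filter fun s => i < s) (γ ⟨i, k⟩) *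
      Wp a d h (sh γ i k (-(h * d i))) j (univ.filter fun s => s < j) (γ ⟨j, l⟩ + h * d j) =
    Wp a d h (sh γ j l (h * d j)) i (univ.filter fun s => i < s) (γ ⟨i, k⟩) *
      Wp a d h γ j (univ.filter fun s => s < j) (γ ⟨j, l⟩ + h * d j) := by
  by_cases hlt : i < j
  · obtain ⟨Q, hQ⟩ := exists_Wp_sh a d h γ i j l (univ.filter fun s => i < s) (γ ⟨i, k⟩)
      (by simpa using hlt)
    obtain ⟨Q', hQ'⟩ := exists_Wp_sh a d h γ j i k (univ.filter fun s => s < j)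
      (γ ⟨j, l⟩ + h * d j) (by simpa using hlt)
    have e1 := hQ 0
    have e2 := hQ' 0
    rw [sh_zero] at e1 e2
    rw [hQ, hQ', e1, e2]
    have hs : (d i : ℂ) * a i j = d j * a j i := by exact_mod_cast hsymm i j
    have hnn : ((-(a j i)).toNat : ℂ) = -(a j i : ℂ) := by
      have : ((-(a j i)).toNat : ℤ) = -(a j i) :=
        Int.toNat_of_nonneg (by have := hoff j i hij.symm; omega)
      exact_mod_cast congrArg (Int.cast : ℤ → ℂ) this
    have hnn' : ((-(a i j)).toNat : ℂ) = -(a i j : ℂ) := by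
      have : ((-(a i j)).toNat : ℤ) = -(a i j) :=
        Int.toNat_of_nonneg (by have := hoff i j hij; omega)
      exact_mod_cast congrArg (Int.cast : ℤ → ℂ) this
    have hzero : (-(a j i)).toNat = 0 ↔ (-(a i j)).toNat = 0 := by
      have h1 := hoff j i hij.symm
      have h2 := hoff i j hij
      have h3 := hsymm i j
      have di : (d i : ℤ) ≠ 0 := by exact_mod_cast (hdpos i).ne'
      have dj : (d j : ℤ) ≠ 0 := by exact_mod_cast (hdpos j).ne'
      constructor
      · intro e
        have e' : a j i = 0 := by omega
        rw [e', mul_zero] at h3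
        simp [(mul_eq_zero.1 h3).resolve_left di]
      · intro e
        have e' : a i j = 0 := by omega
        rw [e', mul_zero] at h3
        simp [(mul_eq_zero.1 h3.symm).resolve_left dj]
    have key := prod_shift_mul (-(a j i)).toNat (-(a i j)).toNat
      (fun r => γ ⟨i, k⟩ - h / 2 * (pr a d i j + ((r : ℂ) + 1) * pr a d j j) - γ ⟨j, l⟩)
      (fun r => γ ⟨j, l⟩ + h * d j - h / 2 * (pr a d j i + ((r : ℂ) + 1) * pr a d i i)
        - γ ⟨i, k⟩ + h * d i) hzero
      (by simp only [hnn', pr, hdiag]; push_cast; linear_combination (h / 2) * hs)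
      (by simp only [hnn, pr, hdiag]; push_cast; linear_combination (-h / 2) * hs)
    have c1 : ∏ r ∈ range (-(a j i)).toNat, (γ ⟨i, k⟩ - h / 2 * (pr a d i j +
        (((r + 1 : ℕ) : ℂ) + 1) * pr a d j j) - γ ⟨j, l⟩) =
        ∏ r ∈ range (-(a j i)).toNat, (γ ⟨i, k⟩ - h / 2 * (pr a d i j +
        ((r : ℂ) + 1) * pr a d j j) - γ ⟨j, l⟩ - h * d j) := by
      refine Finset.prod_congr rfl fun r _ => ?_
      simp only [pr, hdiag]; push_cast; ring
    have c2 : ∏ r ∈ range (-(a i j)).toNat, (γ ⟨j, l⟩ + h * d j - h / 2 * (pr a d j i +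
        (((r + 1 : ℕ) : ℂ) + 1) * pr a d i i) - γ ⟨i, k⟩ + h * d i) =
        ∏ r ∈ range (-(a i j)).toNat, (γ ⟨j, l⟩ + h * d j - h / 2 * (pr a d j i +
        ((r : ℂ) + 1) * pr a d i i) - γ ⟨i, k⟩ - 0) := by
      refine Finset.prod_congr rfl fun r _ => ?_
      simp only [pr, hdiag]; push_cast; ring
    rw [c1, c2] at key
    simp only [sub_neg_eq_add, sub_zero] at key ⊢
    linear_combination (Q * Q') * key
  · rw [Wp_sh_notMem a d h γ i j k _ _ _ (by simpa using hlt),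
      Wp_sh_notMem a d h γ j i l _ _ _ (by simpa using hlt)]

lemma Wp_same_mul (γ : Pt m) (i : Fin ℓ) (x : ℂ) :
    Wp a d h γ i (univ.filter fun s => i < s) x * Wp a d h γ i (univ.filter fun s => s < i) x =
      Wp a d h γ i (univ.filter fun s => s ≠ i) x := by
  unfold Wp
  rw [← Finset.prod_union]
  · congr 1
    ext s
    simp only [mem_union, mem_filter, mem_univ, true_and]
    exact ⟨fun e => e.elim ne_of_gt ne_of_lt, fun e => (lt_or_gt_of_ne e).symm⟩
  · rw [Finset.disjoint_filter]
    exact fun s _ h1 h2 => lt_asymm h1 h2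

lemma kap_eq (i : Fin ℓ) (k : Fin (m i)) (f : Pt m → ℂ) (γ : Pt m) :
    kap a d h i k f γ = ((Real.sqrt (d i) : ℝ) : ℂ)⁻¹ *
      Wp a d h γ i (univ.filter fun s => i < s) (γ ⟨i, k⟩) *
      (Dk γ i k)⁻¹ * f (sh γ i k (-(h * (d i : ℂ)))) := rfl

lemma kap'_eq (R : Fin ℓ → ℂ → ℂ) (i : Fin ℓ) (k : Fin (m i)) (f : Pt m → ℂ) (γ : Pt m) :
    kap' a d h R i k f γ = -((Real.sqrt (d i) : ℝ) : ℂ)⁻¹ * R i (γ ⟨i, k⟩ + h * (d i : ℂ)) *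
      Wp a d h γ i (univ.filter fun s => s < i) (γ ⟨i, k⟩ + h * (d i : ℂ)) *
      (Dk γ i k)⁻¹ * f (sh γ i k (h * (d i : ℂ))) := by
  simp only [kap', Wp, sub_add_eq_add_sub]

/-! ### The individual terms of the two compositions -/

/-- The `(k, l)` term of `E_i(u) F_j(v) f`. -/
def EFterm (R : Fin ℓ → ℂ → ℂ) (u v : ℂ) (i j : Fin ℓ) (k : Fin (m i)) (l : Fin (m j))
    (f : Pt m → ℂ) (γ : Pt m) : ℂ :=
  (u - γ ⟨i, k⟩)⁻¹ * kap a d h i k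
    (fun γ' => (v - γ' ⟨j, l⟩ - h * (d j : ℂ))⁻¹ * kap' a d h R j l f γ') γ

/-- The `(k, l)` term of `F_j(v) E_i(u) f`. -/
def FEterm (R : Fin ℓ → ℂ → ℂ) (u v : ℂ) (i j : Fin ℓ) (k : Fin (m i)) (l : Fin (m j))
    (f : Pt m → ℂ) (γ : Pt m) : ℂ :=
  (v - γ ⟨j, l⟩ - h * (d j : ℂ))⁻¹ * kap' a d h R j l
    (fun γ' => (u - γ' ⟨i, k⟩)⁻¹ * kap a d h i k f γ') γ

lemma commutator_eq_sum (R : Fin ℓ → ℂ → ℂ) (u v : ℂ) (i j : Fin ℓ) (f : Pt m → ℂ) (γ : Pt m) :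
    Eop a d h u i (Fop a d h R v j f) γ - Fop a d h R v j (Eop a d h u i f) γ =
      ∑ k, ∑ l, (EFterm a d h R u v i j k l f γ - FEterm a d h R u v i j k l f γ) := by
  simp only [Finset.sum_sub_distrib]
  congr 1
  · simp only [Eop, Fop, EFterm, kap, Finset.mul_sum]
  · rw [Finset.sum_comm]
    simp only [Eop, Fop, FEterm, kap', Finset.mul_sum]

/-- Terms belonging to two different coordinates `γ_{i,k}`, `γ_{j,l}` commute. -/
lemma EFterm_eq_FEterm
    (hoff : ∀ i j, i ≠ j → a i j ≤ 0) (hdpos : ∀ i, 0 < d i) (hdiag : ∀ i, a i i = 2)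
    (hsymm : ∀ i j, (d i : ℤ) * a i j = (d j : ℤ) * a j i)
    (R : Fin ℓ → ℂ → ℂ) (u v : ℂ) (i j : Fin ℓ) (k : Fin (m i)) (l : Fin (m j))
    (f : Pt m → ℂ) (γ : Pt m)
    (hne : (⟨i, k⟩ : (i : Fin ℓ) × Fin (m i)) ≠ ⟨j, l⟩) :
    EFterm a d h R u v i j k l f γ = FEterm a d h R u v i j k l f γ := by
  unfold EFterm FEterm
  simp only [kap_eq, kap'_eq]
  rw [sh_ne γ i k _ ⟨j, l⟩ hne.symm, sh_ne γ j l _ ⟨i, k⟩ hne,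
    sh_comm γ i j k l]
  have hW : Wp a d h γ i (univ.filter fun s => i < s) (γ ⟨i, k⟩) *
      Wp a d h (sh γ i k (-(h * d i))) j (univ.filter fun s => s < j) (γ ⟨j, l⟩ + h * d j) =
    Wp a d h (sh γ j l (h * d j)) i (univ.filter fun s => i < s) (γ ⟨i, k⟩) *
      Wp a d h γ j (univ.filter fun s => s < j) (γ ⟨j, l⟩ + h * d j) := by
    by_cases hij : i = j
    · subst hij
      rw [Wp_sh_notMem a d h γ i i k _ _ _ (by simp), Wp_sh_notMem a d h γ i i l _ _ _ (by simp)]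
    · exact Wp_exchange a d h hoff hdpos hdiag hsymm γ i j hij k l
  have hD : (Dk γ i k)⁻¹ * (Dk (sh γ i k (-(h * d i))) j l)⁻¹ =
      (Dk γ j l)⁻¹ * (Dk (sh γ j l (h * d j)) i k)⁻¹ := by
    rw [← mul_inv, ← mul_inv]
    congr 1
    by_cases hij : i = j
    · subst hij
      exact Dk_exchange γ i k l _ (fun e => hne (by rw [e]))
    · rw [Dk_sh_ne _ _ _ _ _ _ (Ne.symm hij), Dk_sh_ne _ _ _ _ _ _ hij, mul_comm]
  generalize Dk γ i k = x1 at *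
  generalize Dk γ j l = x2 at *
  generalize Dk (sh γ i k (-(h * d i))) j l = x3 at *
  generalize Dk (sh γ j l (h * d j)) i k = x4 at *
  generalize Wp a d h γ i _ _ = y1 at *
  generalize Wp a d h γ j _ _ = y2 at *
  generalize Wp a d h (sh γ i k _) j _ _ = y3 at *
  generalize Wp a d h (sh γ j l _) i _ _ = y4 at *
  generalize f _ = z
  generalize R j _ = ρ
  generalize (v - _ - _)⁻¹ = w
  generalize (u - _)⁻¹ = w'
  generalize (((Real.sqrt (d i) : ℝ) : ℂ))⁻¹ = q
  generalize (((Real.sqrt (d j) : ℝ) : ℂ))⁻¹ = q'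
  calc _ = -(w * w' * q * q' * ρ * z) * (y1 * y3) * (x1⁻¹ * x3⁻¹) := by ring
    _ = _ := by rw [hW, hD]; ring

/-- The numerator of `H_i`. -/
def Nm (R : Fin ℓ → ℂ → ℂ) (γ : Pt m) (i : Fin ℓ) (x : ℂ) : ℂ :=
  R i x * Wp a d h γ i (univ.filter fun s => s ≠ i) x

lemma sqrt_inv_mul (n : ℕ) : ((Real.sqrt n : ℝ) : ℂ)⁻¹ * ((Real.sqrt n : ℝ) : ℂ)⁻¹ = (n : ℂ)⁻¹ := by
  rw [← mul_inv, ← Complex.ofReal_mul, Real.mul_self_sqrt (Nat.cast_nonneg n)]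
  simp

lemma EFterm_diag (R : Fin ℓ → ℂ → ℂ) (u v : ℂ) (i : Fin ℓ) (k : Fin (m i))
    (f : Pt m → ℂ) (γ : Pt m) :
    EFterm a d h R u v i i k k f γ = -(d i : ℂ)⁻¹ * Nm a d h R γ i (γ ⟨i, k⟩) *
      ((u - γ ⟨i, k⟩)⁻¹ * (v - γ ⟨i, k⟩)⁻¹) *
      (Dk γ i k * Dk (sh γ i k (-(h * d i))) i k)⁻¹ * f γ := by
  unfold EFterm Nm
  simp only [kap_eq, kap'_eq]
  rw [sh_sh_same, neg_add_cancel, sh_zero, sh_same, ← Wp_same_mul, ← sqrt_inv_mul, mul_inv,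
    Wp_sh_notMem a d h γ i i k _ _ _ (by simp), neg_add_cancel_right,
    show v - (γ ⟨i, k⟩ + -(h * d i)) - h * d i = v - γ ⟨i, k⟩ by ring]
  ring

lemma FEterm_diag (R : Fin ℓ → ℂ → ℂ) (u v : ℂ) (i : Fin ℓ) (k : Fin (m i))
    (f : Pt m → ℂ) (γ : Pt m) :
    FEterm a d h R u v i i k k f γ = -(d i : ℂ)⁻¹ * Nm a d h R γ i (γ ⟨i, k⟩ + h * d i) *
      ((u - (γ ⟨i, k⟩ + h * d i))⁻¹ * (v - (γ ⟨i, k⟩ + h * d i))⁻¹) *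
      (Dk γ i k * Dk (sh γ i k (h * d i)) i k)⁻¹ * f γ := by
  unfold FEterm Nm
  simp only [kap_eq, kap'_eq]
  rw [sh_sh_same, add_neg_cancel, sh_zero, sh_same, ← Wp_same_mul, ← sqrt_inv_mul, mul_inv,
    Wp_sh_notMem a d h γ i i k _ _ _ (by simp), sub_sub v]
  ring

end Wp

/-! ### Partial fractions -/

/-- Partial fraction expansion at simple nodes of a quotient whose numerator has degree at most
the number of nodes; the polynomial part is a constant, and cancels in the difference. -/
lemma partial_fractions {ι : Type*} [Fintype ι] [DecidableEq ι] (x : ι → ℂ)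
    (hx : Function.Injective x) (P : Polynomial ℂ) (hP : P.natDegree ≤ Fintype.card ι) (u v : ℂ)
    (hu : ∀ c, u ≠ x c) (hv : ∀ c, v ≠ x c) :
    P.eval u * (∏ c, (u - x c))⁻¹ - P.eval v * (∏ c, (v - x c))⁻¹ =
      ∑ c, (∏ c' ∈ univ.erase c, (x c - x c'))⁻¹ * P.eval (x c) *
        ((u - x c)⁻¹ - (v - x c)⁻¹) := by
  set b := P.coeff (Fintype.card ι) with hb
  have hmon : (Lagrange.nodal univ x).Monic := Lagrange.nodal_monic
  have hdeg : (Lagrange.nodal univ x).natDegree = Fintype.card ι := by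
    rw [Lagrange.natDegree_nodal, card_univ]
  set Q := P - Polynomial.C b * Lagrange.nodal univ x with hQ
  have hQdeg : Q.degree < (univ : Finset ι).card := by
    rw [card_univ, Polynomial.degree_lt_iff_coeff_zero]
    intro n hn
    rcases hn.eq_or_lt with e | e
    · have := hmon.coeff_natDegree
      rw [hdeg] at this
      rw [← e, hQ, Polynomial.coeff_sub, Polynomial.coeff_C_mul, this, hb, mul_one, sub_self]
    · rw [hQ, Polynomial.coeff_sub, Polynomial.coeff_C_mul,
        Polynomial.coeff_eq_zero_of_natDegree_lt (hP.trans_lt e),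
        Polynomial.coeff_eq_zero_of_natDegree_lt (hdeg.trans_lt e), mul_zero, sub_self]
  have hint := Lagrange.eq_interpolate (s := univ) (v := x) hx.injOn hQdeg
  have key : ∀ w : ℂ, (∀ c, w ≠ x c) → P.eval w * (∏ c, (w - x c))⁻¹ = b +
      ∑ c, (∏ c' ∈ univ.erase c, (x c - x c'))⁻¹ * P.eval (x c) * (w - x c)⁻¹ := by
    intro w hw
    have hne : ∏ c, (w - x c) ≠ 0 := Finset.prod_ne_zero_iff.2 fun c _ => sub_ne_zero.2 (hw c)
    have e1 : P.eval w = b * ∏ c, (w - x c) + Q.eval w := by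
      rw [hQ, Polynomial.eval_sub, Polynomial.eval_mul, Polynomial.eval_C, Lagrange.eval_nodal]
      ring
    have e2 : Q.eval w = (∏ c, (w - x c)) *
        ∑ c, (∏ c' ∈ univ.erase c, (x c - x c'))⁻¹ * P.eval (x c) * (w - x c)⁻¹ := by
      rw [hint, Lagrange.eval_interpolate_not_at_node _ (fun c _ => hw c), Lagrange.eval_nodal]
      congr 1
      refine Finset.sum_congr rfl fun c _ => ?_
      have : Q.eval (x c) = P.eval (x c) := by
        rw [hQ, Polynomial.eval_sub, Polynomial.eval_mul,
          Lagrange.eval_nodal_at_node (mem_univ c), mul_zero, sub_zero]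
      rw [this, Lagrange.nodalWeight, Finset.prod_inv_distrib]
      ring
    rw [e1, e2]
    field_simp
  rw [key u hu, key v hv, add_sub_add_left_eq_sub, ← Finset.sum_sub_distrib]
  exact Finset.sum_congr rfl fun c _ => by ring

/-- The numerator of `H_i` is a polynomial of degree at most `l_i - ∑_{s ≠ i} m_s a_{si} = 2 m_i`. -/
lemma exists_numerator (a : Fin ℓ → Fin ℓ → ℤ) (d : Fin ℓ → ℕ)
    (hdiag : ∀ i, a i i = 2) (hoff : ∀ i j, i ≠ j → a i j ≤ 0)
    (h : ℂ) (R : Fin ℓ → ℂ → ℂ) (hpos : ∀ i, 0 ≤ ∑ j, (m j : ℤ) * a j i)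
    (ν : (i : Fin ℓ) → Fin (∑ j, (m j : ℤ) * a j i).toNat → ℂ)
    (hR : ∀ i u, R i u = ∏ k, (u - ν i k)) (γ : Pt m) (i : Fin ℓ) :
    ∃ P : Polynomial ℂ, P.natDegree ≤ 2 * m i ∧ ∀ x, P.eval x = Nm a d h R γ i x := by
  classical
  refine ⟨(∏ k, (Polynomial.X - Polynomial.C (ν i k))) *
    ∏ s ∈ univ.filter (fun s => s ≠ i), ∏ r ∈ Finset.range (-(a s i)).toNat, ∏ p : Fin (m s),
      (Polynomial.X - Polynomial.C
        (h / 2 * (pr a d i s + ((r : ℂ) + 1) * pr a d s s) + γ ⟨s, p⟩)), ?_, fun x => ?_⟩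
  · have h1 : (∏ k, (Polynomial.X - Polynomial.C (ν i k))).natDegree ≤
        (∑ j, (m j : ℤ) * a j i).toNat := by
      refine (Polynomial.natDegree_prod_le _ _).trans ?_
      simp
    have h2 : (∏ s ∈ univ.filter (fun s => s ≠ i), ∏ r ∈ Finset.range (-(a s i)).toNat,
        ∏ p : Fin (m s), (Polynomial.X - Polynomial.C
        (h / 2 * (pr a d i s + ((r : ℂ) + 1) * pr a d s s) + γ ⟨s, p⟩))).natDegree ≤
        ∑ s ∈ univ.filter (fun s => s ≠ i), (-(a s i)).toNat * m s := by
      refine (Polynomial.natDegree_prod_le _ _).trans (Finset.sum_le_sum fun s _ => ?_)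
      refine (Polynomial.natDegree_prod_le _ _).trans ?_
      refine (Finset.sum_le_card_nsmul _ _ (m s) fun r _ => ?_).trans (by simp)
      refine (Polynomial.natDegree_prod_le _ _).trans ?_
      simp only [Polynomial.natDegree_X_sub_C, Finset.sum_const, card_univ, Fintype.card_fin,
        smul_eq_mul, mul_one, le_refl]
    refine Polynomial.natDegree_mul_le.trans ((add_le_add h1 h2).trans ?_)
    zify
    rw [Int.toNat_of_nonneg (hpos i)]
    have h3 : ∑ s ∈ univ.filter (fun s => s ≠ i), ((-(a s i)).toNat : ℤ) * m s =
        -∑ s ∈ univ.filter (fun s => s ≠ i), (m s : ℤ) * a s i := by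
      rw [← Finset.sum_neg_distrib]
      refine Finset.sum_congr rfl fun s hs => ?_
      rw [Int.toNat_of_nonneg (by have := hoff s i (by simpa using hs); omega)]
      ring
    have h4 := Finset.add_sum_erase univ (fun s => (m s : ℤ) * a s i) (mem_univ i)
    rw [h3, ← h4, Finset.filter_ne' univ i, hdiag]
    linarith
  · simp only [Nm, Wp, Pp, hR, Polynomial.eval_mul, Polynomial.eval_prod, Polynomial.eval_sub,
      Polynomial.eval_X, Polynomial.eval_C, sub_sub]

lemma prod_erase_inl {n : ℕ} (g : Fin n ⊕ Fin n → ℂ) (k : Fin n) :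
    ∏ c ∈ univ.erase (Sum.inl k), g c =
      (∏ p ∈ univ.erase k, g (Sum.inl p)) * ∏ p, g (Sum.inr p) := by
  rw [← Finset.prod_disjSum]
  congr 1
  ext c
  rcases c with c | c <;> simp

lemma prod_erase_inr {n : ℕ} (g : Fin n ⊕ Fin n → ℂ) (k : Fin n) :
    ∏ c ∈ univ.erase (Sum.inr k), g c =
      (∏ p, g (Sum.inl p)) * ∏ p ∈ univ.erase k, g (Sum.inr p) := by
  rw [← Finset.prod_disjSum]
  congr 1
  ext c
  rcases c with c | c <;> simp

/-- The partial fraction expansion of `H_i(u) - H_i(v)`, with poles at `γ_{i,k}` and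
`γ_{i,k} + h d_i`; these are pairwise distinct because `h ≠ 0` and the denominators `Dk` do not
vanish. -/
lemma Hop_sub (a : Fin ℓ → Fin ℓ → ℤ) (d : Fin ℓ → ℕ)
    (hdiag : ∀ i, a i i = 2) (hoff : ∀ i j, i ≠ j → a i j ≤ 0) (hdpos : ∀ i, 0 < d i)
    (h : ℂ) (h0 : h ≠ 0) (R : Fin ℓ → ℂ → ℂ) (hpos : ∀ i, 0 ≤ ∑ j, (m j : ℤ) * a j i)
    (ν : (i : Fin ℓ) → Fin (∑ j, (m j : ℤ) * a j i).toNat → ℂ)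
    (hR : ∀ i u, R i u = ∏ k, (u - ν i k)) (i : Fin ℓ) (u v : ℂ) (f : Pt m → ℂ) (γ : Pt m)
    (hD : ∀ k : Fin (m i), Dk γ i k ≠ 0)
    (hDs : ∀ k l : Fin (m i), Dk (sh γ i k (-(h * (d i : ℂ)))) i l ≠ 0)
    (hPu : Pp γ i u * Pp γ i (u - h * (d i : ℂ)) ≠ 0)
    (hPv : Pp γ i v * Pp γ i (v - h * (d i : ℂ)) ≠ 0) :
    Hop a d h R u i f γ - Hop a d h R v i f γ = ∑ k,
      ((Dk γ i k * (-(h * d i) * Dk (sh γ i k (-(h * d i))) i k))⁻¹ *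
          Nm a d h R γ i (γ ⟨i, k⟩) * ((u - γ ⟨i, k⟩)⁻¹ - (v - γ ⟨i, k⟩)⁻¹) +
        ((h * d i * Dk (sh γ i k (h * d i)) i k) * Dk γ i k)⁻¹ *
          Nm a d h R γ i (γ ⟨i, k⟩ + h * d i) *
          ((u - (γ ⟨i, k⟩ + h * d i))⁻¹ - (v - (γ ⟨i, k⟩ + h * d i))⁻¹)) * f γ := by
  have hd : h * (d i : ℂ) ≠ 0 := mul_ne_zero h0 (Nat.cast_ne_zero.2 (hdpos i).ne')
  have hne1 : ∀ k l : Fin (m i), k ≠ l → γ ⟨i, k⟩ ≠ γ ⟨i, l⟩ := by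
    intro k l hkl
    have := hD k
    rw [Dk_split γ i k l hkl.symm] at this
    exact sub_ne_zero.1 (left_ne_zero_of_mul this)
  have hne2 : ∀ k l : Fin (m i), γ ⟨i, k⟩ ≠ γ ⟨i, l⟩ + h * d i := by
    intro k l e
    by_cases hkl : k = l
    · subst hkl
      exact hd (by linear_combination -e)
    · have := hDs k l
      rw [Dk_sh_split γ i l k _ hkl] at this
      exact left_ne_zero_of_mul this (by linear_combination -e)
  let x : Fin (m i) ⊕ Fin (m i) → ℂ :=
    Sum.elim (fun k => γ ⟨i, k⟩) (fun k => γ ⟨i, k⟩ + h * d i)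
  have hx : Function.Injective x := by
    rintro (k | k) (l | l) e
    · by_contra hkl
      exact hne1 k l (fun e' => hkl (by rw [e'])) e
    · exact (hne2 k l e).elim
    · exact (hne2 l k e.symm).elim
    · by_contra hkl
      exact hne1 k l (fun e' => hkl (by rw [e'])) (add_right_cancel e)
  have hprod : ∀ w, ∏ c, (w - x c) = Pp γ i w * Pp γ i (w - h * d i) := by
    intro w
    rw [Fintype.prod_sum_type]
    simp only [x, Sum.elim_inl, Sum.elim_inr, Pp]
    congr 1
    exact Finset.prod_congr rfl fun p _ => by ring
  have hnode : ∀ w, Pp γ i w * Pp γ i (w - h * d i) ≠ 0 → ∀ c, w ≠ x c := by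
    intro w hw c
    rw [← hprod, Finset.prod_ne_zero_iff] at hw
    exact sub_ne_zero.1 (hw c (mem_univ c))
  obtain ⟨P, hPdeg, hP⟩ := exists_numerator a d hdiag hoff h R hpos ν hR γ i
  have key := partial_fractions x hx P (by simpa [two_mul] using hPdeg) u v
    (hnode u hPu) (hnode v hPv)
  simp only [hP, hprod] at key
  have hH : ∀ w, Hop a d h R w i f γ =
      Nm a d h R γ i w * (Pp γ i w * Pp γ i (w - h * d i))⁻¹ * f γ := fun w => rfl
  have e1 : ∀ k, ∏ c ∈ univ.erase (Sum.inl k), (x (Sum.inl k) - x c) =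
      Dk γ i k * (-(h * d i) * Dk (sh γ i k (-(h * d i))) i k) := by
    intro k
    rw [prod_erase_inl, Dk_sh_same,
      ← Finset.mul_prod_erase univ (fun p => x (Sum.inl k) - x (Sum.inr p)) (mem_univ k)]
    simp only [x, Sum.elim_inl, Sum.elim_inr, Dk]
    congr 2
    · ring
    · exact Finset.prod_congr rfl fun p _ => by ring
  have e2 : ∀ k, ∏ c ∈ univ.erase (Sum.inr k), (x (Sum.inr k) - x c) =
      (h * d i * Dk (sh γ i k (h * d i)) i k) * Dk γ i k := by
    intro k
    rw [prod_erase_inr, Dk_sh_same,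
      ← Finset.mul_prod_erase univ (fun p => x (Sum.inr k) - x (Sum.inl p)) (mem_univ k)]
    simp only [x, Sum.elim_inl, Sum.elim_inr, Dk]
    congr 2
    · ring
    · exact funext fun p => by ring
  rw [hH, hH, ← sub_mul, key, Fintype.sum_sum_type]
  simp only [e1, e2]
  rw [← Finset.sum_add_distrib, Finset.sum_mul]
  rfl

/-- The relation `[E_i(u), F_j(v)] = −h·δ_{ij}·(u−v)⁻¹·(H_i(u) − H_i(v))` for the explicit
difference operators, when each `R_i` is a monic polynomial
`R_i(u) = ∏_{k=1}^{l_i}(u − ν_{i,k})` of degree `l_i = Σ_j m_j a_{ji} ≥ 0`.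
In particular `E_i(u)` and `F_j(v)` commute for `i ≠ j`. -/
theorem E_F_commutation
    (hℓ : 1 ≤ ℓ) (a : Fin ℓ → Fin ℓ → ℤ) (d : Fin ℓ → ℕ)
    (hdiag : ∀ i, a i i = 2) (hoff : ∀ i j, i ≠ j → a i j ≤ 0)
    (hdpos : ∀ i, 0 < d i) (hsymm : ∀ i j, (d i : ℤ) * a i j = (d j : ℤ) * a j i)
    (h : ℂ) (R : Fin ℓ → ℂ → ℂ)
    (hpos : ∀ i, 0 ≤ ∑ j, (m j : ℤ) * a j i)
    (ν : (i : Fin ℓ) → Fin (∑ j, (m j : ℤ) * a j i).toNat → ℂ)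
    (hR : ∀ i u, R i u = ∏ k, (u - ν i k))
    (i j : Fin ℓ) (u v : ℂ) (huv : u ≠ v)
    (f : Pt m → ℂ) (γ : Pt m)
    (hDi : ∀ k : Fin (m i), Dk γ i k ≠ 0)
    (hDj : ∀ l : Fin (m j), Dk γ j l ≠ 0)
    (hDs1 : ∀ (k : Fin (m i)) (l : Fin (m j)), Dk (sh γ i k (-(h * (d i : ℂ)))) j l ≠ 0)
    (hDs2 : ∀ (l : Fin (m j)) (k : Fin (m i)), Dk (sh γ j l (h * (d j : ℂ))) i k ≠ 0)
    (hu : ∀ k : Fin (m i), u - γ ⟨i, k⟩ ≠ 0)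
    (hv : ∀ l : Fin (m j), v - γ ⟨j, l⟩ - h * (d j : ℂ) ≠ 0)
    (hvs : ∀ (k : Fin (m i)) (l : Fin (m j)),
      v - (sh γ i k (-(h * (d i : ℂ)))) ⟨j, l⟩ - h * (d j : ℂ) ≠ 0)
    (hus : ∀ (l : Fin (m j)) (k : Fin (m i)),
      u - (sh γ j l (h * (d j : ℂ))) ⟨i, k⟩ ≠ 0)
    (hPu : Pp γ i u * Pp γ i (u - h * (d i : ℂ)) ≠ 0)
    (hPv : Pp γ i v * Pp γ i (v - h * (d i : ℂ)) ≠ 0) :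
    Eop a d h u i (Fop a d h R v j f) γ - Fop a d h R v j (Eop a d h u i f) γ
      = -h * (if i = j then 1 else 0) * (u - v)⁻¹ *
          (Hop a d h R u i f γ - Hop a d h R v i f γ) := by
  rw [commutator_eq_sum]
  by_cases hij : i = j
  · subst hij
    have hcol : ∀ k : Fin (m i),
        ∑ l, (EFterm a d h R u v i i k l f γ - FEterm a d h R u v i i k l f γ) =
          EFterm a d h R u v i i k k f γ - FEterm a d h R u v i i k k f γ := by
      intro k
      refine Finset.sum_eq_single k (fun l _ hl => ?_) (by simp)
      rw [EFterm_eq_FEterm a d h hoff hdpos hdiag hsymm R u v i i k l f γ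
        (by simpa using hl.symm), sub_self]
    simp only [hcol, EFterm_diag, FEterm_diag, if_true, mul_one]
    -- For `h = 0` the poles of `H_i` collide, but both sides vanish.
    by_cases h0 : h = 0
    · subst h0
      simp [sh_zero]
    · rw [Hop_sub a d hdiag hoff hdpos h h0 R hpos ν hR i u v f γ hDi hDs1 hPu hPv,
        Finset.mul_sum]
      refine Finset.sum_congr rfl fun k _ => ?_
      have hdi : (d i : ℂ) ≠ 0 := Nat.cast_ne_zero.2 (hdpos i).ne'
      have huv' : u - v ≠ 0 := sub_ne_zero.2 huv
      have hpole : ∀ x, u - x ≠ 0 → v - x ≠ 0 →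
          (u - x)⁻¹ - (v - x)⁻¹ = -(u - v) * ((u - x)⁻¹ * (v - x)⁻¹) := by
        intro x h1 h2
        field_simp
        ring
      have hvk : v - γ ⟨i, k⟩ ≠ 0 := by
        have := hvs k k
        rw [sh_same] at this
        exact fun e => this (by linear_combination e)
      have huk : u - (γ ⟨i, k⟩ + h * d i) ≠ 0 := by
        have := hus k k
        rwa [sh_same] at this
      rw [hpole _ (hu k) hvk, hpole _ huk (by rw [← sub_sub]; exact hv k)]
      generalize (u - γ ⟨i, k⟩)⁻¹ * (v - γ ⟨i, k⟩)⁻¹ = p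
      generalize (u - (γ ⟨i, k⟩ + h * d i))⁻¹ * (v - (γ ⟨i, k⟩ + h * d i))⁻¹ = q
      have n1 := hDi k
      have n2 := hDs1 k k
      have n3 := hDs2 k k
      field_simp
      ring
  · rw [if_neg hij, mul_zero, zero_mul, zero_mul]
    refine Finset.sum_eq_zero fun k _ => Finset.sum_eq_zero fun l _ => ?_
    rw [EFterm_eq_FEterm a d h hoff hdpos hdiag hsymm R u v i j k l f γ
      (fun e => hij (congrArg Sigma.fst e)), sub_self]

end
end
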